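/- arXiv:1208.1440 — 5 statements merged into one kernel-verified Lean document; each statement's English description precedes it below -/
import Mathlib

section
/- Let f and g be real polynomials of the same degree n ≥ 1 whose zeros are all real: f has zeros a_1 < a_2 < ⋯ < a_n and g has zeros b_1 < b_2 < ⋯ < b_n, and g interlaces f in the sense that b_1 < a_1 < b_2 < a_2 < ⋯ < b_n < a_n. Let α, β be real numbers with β < 0, and set F = α·f + β·g. If F has degree n and the leading coefficients of F and g have the same sign, then F has n real zeros c_1 < c_2 < ⋯ < c_n and f interlaces F: a_1 < c_1 < a_2 < c_2 < ⋯ < a_n < c_n. -/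
open Polynomial Finset

theorem ic_ivt (p : Polynomial ℝ) (x y : ℝ) (hxy : x < y) (h : p.eval x * p.eval y < 0) :
    ∃ c, x < c ∧ c < y ∧ p.IsRoot c := by
  have hc : ContinuousOn (fun t => p.eval t) (Set.Icc x y) := p.continuous.continuousOn
  rcases mul_neg_iff.1 h with ⟨h1, h2⟩ | ⟨h1, h2⟩
  · obtain ⟨c, hc1, hc2⟩ := intermediate_value_Ioo' hxy.le hc ⟨h2, h1⟩
    exact ⟨c, hc1.1, hc1.2, hc2⟩
  · obtain ⟨c, hc1, hc2⟩ := intermediate_value_Ioo hxy.le hc ⟨h1, h2⟩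
    exact ⟨c, hc1.1, hc1.2, hc2⟩

/-- If `g` interlaces `f` (zeros `b₁ < a₁ < b₂ < ⋯ < bₙ < aₙ`) and `F = α f + β g` with
`β < 0` has degree `n` and leading coefficient of the same sign as that of `g`, then `F`
has `n` real zeros which `f` interlaces: `a₁ < c₁ < a₂ < ⋯ < aₙ < cₙ`. -/
theorem interlacing_combination (n : ℕ) (hn : 1 ≤ n) (f g : Polynomial ℝ)
    (a b : Fin n → ℝ) (ha : StrictMono a) (hb : StrictMono b)
    (hf : f = Polynomial.C f.leadingCoeff * ∏ i : Fin n, (Polynomial.X - Polynomial.C (a i)))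
    (hg : g = Polynomial.C g.leadingCoeff * ∏ i : Fin n, (Polynomial.X - Polynomial.C (b i)))
    (hfdeg : f.degree = n) (hgdeg : g.degree = n)
    (hinter : (∀ i, b i < a i) ∧ ∀ i j : Fin n, (i : ℕ) + 1 = (j : ℕ) → a i < b j)
    (α β : ℝ) (hβ : β < 0) (F : Polynomial ℝ)
    (hF : F = Polynomial.C α * f + Polynomial.C β * g)
    (hFdeg : F.degree = n) (hsign : 0 < F.leadingCoeff * g.leadingCoeff) :
    ∃ c : Fin n → ℝ, StrictMono c ∧ (∀ i, F.IsRoot (c i)) ∧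
      (∀ i, a i < c i) ∧ ∀ i j : Fin n, (i : ℕ) + 1 = (j : ℕ) → c i < a j := by
  obtain ⟨hba, hab⟩ := hinter
  have hg0 : g.leadingCoeff ≠ 0 := by
    intro h
    simp [h] at hsign
  have hgev : ∀ x, g.eval x = g.leadingCoeff * ∏ k : Fin n, (x - b k) := by
    intro x
    conv_lhs => rw [hg]
    simp [eval_prod]
  have hfa : ∀ i, f.eval (a i) = 0 := by
    intro i
    rw [hf]
    simp only [eval_mul, eval_C, eval_prod, eval_sub, eval_X]
    rw [Finset.prod_eq_zero (Finset.mem_univ i) (sub_self _), mul_zero]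
  have hFa : ∀ i, F.eval (a i) = β * (g.leadingCoeff * ∏ k : Fin n, (a i - b k)) := by
    intro i
    rw [hF, ← hgev]
    simp [hfa]
  have hab' : ∀ i j : Fin n, i < j → a i < b j := by
    intro i j hij
    have h1 : (i : ℕ) + 1 ≤ j := hij
    have h2 : (i : ℕ) + 1 < n := lt_of_le_of_lt h1 j.2
    exact lt_of_lt_of_le (hab i ⟨i + 1, h2⟩ rfl) (hb.monotone h1)
  have hba' : ∀ i j : Fin n, j ≤ i → b j < a i := fun i j hij =>
    lt_of_lt_of_le (hba j) (ha.monotone hij)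
  have hstep : ∀ i j : Fin n, (i : ℕ) + 1 = (j : ℕ) → F.eval (a i) * F.eval (a j) < 0 := by
    intro i j hij
    have hlt : i < j := by
      rw [Fin.lt_def]
      omega
    have hprod : ∏ k : Fin n, ((a i - b k) * (a j - b k)) < 0 := by
      rw [← Finset.mul_prod_erase _ _ (Finset.mem_univ j)]
      apply mul_neg_of_neg_of_pos
      · exact mul_neg_of_neg_of_pos (sub_neg.2 (hab' i j hlt)) (sub_pos.2 (hba j))
      · apply Finset.prod_pos
        intro k hk
        have hkj : k ≠ j := (Finset.mem_erase.1 hk).1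
        rcases lt_or_gt_of_ne hkj with h | h
        · have h' : k ≤ i := by
            rw [Fin.le_def]
            rw [Fin.lt_def] at h
            omega
          exact mul_pos (sub_pos.2 (hba' i k h')) (sub_pos.2 (hba' j k h.le))
        · exact mul_pos_of_neg_of_neg (sub_neg.2 (hab' i k (hlt.trans h)))
            (sub_neg.2 (hab' j k h))
    rw [Finset.prod_mul_distrib] at hprod
    rw [hFa, hFa]
    have hpos : 0 < (β * g.leadingCoeff) ^ 2 := by
      have := mul_ne_zero hβ.ne hg0
      positivity
    calc _ = (β * g.leadingCoeff) ^ 2 *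
          ((∏ k : Fin n, (a i - b k)) * ∏ k : Fin n, (a j - b k)) := by ring
      _ < 0 := mul_neg_of_pos_of_neg hpos hprod
  have hlast : ∀ i : Fin n, (i : ℕ) + 1 = n → ∃ x, a i < x ∧ F.eval (a i) * F.eval x < 0 := by
    intro i hi
    have hneg : g.leadingCoeff * F.eval (a i) < 0 := by
      have hp : 0 < ∏ k : Fin n, (a i - b k) := by
        apply Finset.prod_pos
        intro k _
        apply sub_pos.2 (hba' i k _)
        rw [Fin.le_def]
        omega
      rw [hFa]
      have hpos : 0 < g.leadingCoeff ^ 2 := by positivity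
      calc _ = β * (g.leadingCoeff ^ 2 * ∏ k : Fin n, (a i - b k)) := by ring
        _ < 0 := mul_neg_of_neg_of_pos hβ (mul_pos hpos hp)
    have htend : Filter.Tendsto (fun x => (C g.leadingCoeff * F).eval x)
        Filter.atTop Filter.atTop := by
      apply Polynomial.tendsto_atTop_of_leadingCoeff_nonneg
      · rw [degree_C_mul hg0, hFdeg]
        exact_mod_cast hn
      · rw [leadingCoeff_mul, leadingCoeff_C]
        linarith
    obtain ⟨x, hx1, hx2⟩ := ((htend.eventually_gt_atTop 0).and
      (Filter.eventually_gt_atTop (a i))).exists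
    refine ⟨x, hx2, ?_⟩
    simp only [eval_mul, eval_C] at hx1
    have hpos : 0 < g.leadingCoeff ^ 2 := by positivity
    have := mul_neg_of_neg_of_pos hneg hx1
    by_contra hcon
    have h3 := mul_nonneg hpos.le (not_lt.1 hcon)
    nlinarith
  have hex : ∀ i : Fin n, ∃ c, F.IsRoot c ∧ a i < c ∧
      ∀ j : Fin n, (i : ℕ) + 1 = (j : ℕ) → c < a j := by
    intro i
    by_cases h : (i : ℕ) + 1 < n
    · obtain ⟨c, h1, h2, h3⟩ := ic_ivt F (a i) (a ⟨i + 1, h⟩)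
        (ha (by rw [Fin.lt_def]; simp)) (hstep i ⟨i + 1, h⟩ rfl)
      refine ⟨c, h3, h1, ?_⟩
      intro j hj
      have : j = ⟨i + 1, h⟩ := Fin.ext hj.symm
      rw [this]
      exact h2
    · obtain ⟨x, hx, hx'⟩ := hlast i (by omega)
      obtain ⟨c, h1, h2, h3⟩ := ic_ivt F (a i) x hx hx'
      refine ⟨c, h3, h1, ?_⟩
      intro j hj
      omega
  choose c hc1 hc2 hc3 using hex
  refine ⟨c, ?_, hc1, hc2, hc3⟩
  intro i j hij
  have h1 : (i : ℕ) + 1 ≤ j := hij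
  have h2 : (i : ℕ) + 1 < n := lt_of_le_of_lt h1 j.2
  exact (hc3 i ⟨i + 1, h2⟩ rfl).trans (lt_of_le_of_lt (ha.monotone h1) (hc2 j))
end

section
/- For every natural number n ≥ 1 and every complex s with Re(s) > 0 and s ≠ 1, ∫_0^∞ x^{n−2+s} · (d^n/dx^n)( x/(e^x − 1) ) dx = (−1)^n (s − 1) Γ(n − 1 + s) ζ(s), where the integrand involves the n-th derivative of the function x ↦ x/(e^x − 1) on (0, ∞). -/
open Complex Real MeasureTheory

noncomputable def FF : ℂ → ℂ := fun z => (dslope Complex.exp 0 z)⁻¹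

lemma FF_ne (z : ℂ) (hz : |z.im| < 2) : dslope Complex.exp 0 z ≠ 0 := by
  by_cases h : z = 0
  · subst h; simp
  · rw [dslope_of_ne _ h, slope_def_field]
    simp only [Complex.exp_zero, sub_zero]
    refine div_ne_zero ?_ h
    intro h1
    rw [sub_eq_zero, Complex.exp_eq_one_iff] at h1
    obtain ⟨n, hn⟩ := h1
    have him : z.im = n * (2 * π) := by rw [hn]; simp
    have hn0 : n ≠ 0 := by rintro rfl; simp at hn; exact h hn
    have h1 : (1:ℝ) ≤ |(n:ℝ)| := by exact_mod_cast Int.one_le_abs hn0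
    rw [him, abs_mul, abs_of_pos (a := 2 * π) (by positivity)] at hz
    nlinarith [Real.pi_gt_three]

lemma FF_eq (z : ℂ) (h : z ≠ 0) : FF z = z / (Complex.exp z - 1) := by
  simp [FF, dslope_of_ne _ h, slope_def_field]

lemma FF_diffAt (z : ℂ) (hz : |z.im| < 2) : DifferentiableAt ℂ FF z := by
  have : Differentiable ℂ (dslope Complex.exp 0) := by
    rw [← differentiableOn_univ, Complex.differentiableOn_dslope Filter.univ_mem]
    exact Complex.differentiable_exp.differentiableOn
  exact (this z).inv (FF_ne z hz)

lemma isOpen_strip : IsOpen {z : ℂ | |z.im| < 2} :=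
  isOpen_lt (by fun_prop) continuous_const

lemma FF_iter_diffAt (n : ℕ) (z : ℂ) (hz : |z.im| < 2) :
    DifferentiableAt ℂ (iteratedDeriv n FF) z := by
  have h0 : AnalyticAt ℂ FF z := 
    DifferentiableOn.analyticAt (s := {z : ℂ | |z.im| < 2})
     (fun w hw => (FF_diffAt w hw).differentiableWithinAt)
     (isOpen_strip.mem_nhds hz)
  rw [iteratedDeriv_eq_iterate]; exact (h0.iterated_deriv n).differentiableAt

lemma FF_bound : ∃ C : ℝ, 0 < C ∧ ∀ z : ℂ, -1 ≤ z.re → |z.im| ≤ 1 → 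
    ‖FF z‖ ≤ C * Real.exp (-(z.re / 2)) := by
  have hK : IsCompact (Set.Icc (-1:ℝ) 2 ×ℂ Set.Icc (-1:ℝ) 1) := isCompact_Icc.reProdIm isCompact_Icc
  obtain ⟨C, hC⟩ := hK.exists_bound_of_continuousOn (f := FF) (by
    intro z hz
    rw [mem_reProdIm] at hz
    refine (FF_diffAt z ?_).continuousAt.continuousWithinAt
    have := abs_le.2 hz.2
    linarith)
  refine ⟨max (C * Real.exp 1) 4, by positivity, fun z hz1 hz2 => ?_⟩
  rcases le_total z.re 2 with h | h
  · have h1 := hC z (by rw [mem_reProdIm]; exact ⟨⟨hz1, h⟩, abs_le.1 hz2⟩)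
    have hC0 : 0 ≤ C := (norm_nonneg _).trans h1
    calc ‖FF z‖ ≤ C * 1 := by simpa using h1
      _ ≤ C * Real.exp (1 + -(z.re/2)) := by
        gcongr; apply Real.one_le_exp; linarith
      _ = (C * Real.exp 1) * Real.exp (-(z.re/2)) := by rw [Real.exp_add]; ring
      _ ≤ _ := by gcongr; exact le_max_left _ _
  · have hz : z ≠ 0 := by rintro rfl; simp at h; linarith
    rw [FF_eq z hz, norm_div]
    have h1 : ‖z‖ ≤ 2 * Real.exp (z.re/2) := by
      have := Complex.norm_le_abs_re_add_abs_im z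
      rw [abs_of_nonneg (by linarith : 0 ≤ z.re)] at this
      have := Real.add_one_le_exp (z.re/2)
      linarith
    have h3 : 2 ≤ Real.exp z.re := by have := Real.add_one_le_exp z.re; linarith
    have h2 : Real.exp z.re / 2 ≤ ‖Complex.exp z - 1‖ := by
      have := norm_sub_norm_le (Complex.exp z) 1
      rw [Complex.norm_exp, norm_one] at this
      linarith
    calc _ ≤ 2 * Real.exp (z.re/2) / (Real.exp z.re / 2) := by gcongr
      _ = 4 * Real.exp (-(z.re/2)) := by
        have : Real.exp z.re = Real.exp (z.re/2) * Real.exp (z.re/2) := by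
          rw [← Real.exp_add]; congr 1; ring
        rw [this, Real.exp_neg]; field_simp; norm_num
      _ ≤ _ := by gcongr; exact le_max_right _ _

lemma FF_iter_bound (n : ℕ) : ∃ C : ℝ, ∀ x : ℝ, 0 ≤ x → 
    ‖iteratedDeriv n FF x‖ ≤ C * Real.exp (-(1/2) * x) := by
  obtain ⟨C, hC0, hC⟩ := FF_bound
  refine ⟨n.factorial * (C * Real.exp (1/2)), fun x hx => ?_⟩
  have := Complex.norm_iteratedDeriv_le_of_forall_mem_sphere_norm_le (f := FF) (c := x) (R := 1)
    (C := C * Real.exp (1/2) * Real.exp (-(1/2) * x)) n one_pos ?_ ?_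
  · refine this.trans (le_of_eq ?_); simp; ring
  · apply DifferentiableOn.diffContOnCl
    intro z hz
    refine (FF_diffAt z ?_).differentiableWithinAt
    rw [closure_ball _ one_ne_zero, mem_closedBall_iff_norm] at hz
    have := (Complex.abs_im_le_norm (z - x)).trans hz
    simp at this; linarith
  · intro z hz
    rw [mem_sphere_iff_norm] at hz
    have h1 := (Complex.abs_im_le_norm (z - x)).trans hz.le
    have h2 := (Complex.abs_re_le_norm (z - x)).trans hz.le
    simp at h1 h2
    rw [abs_le] at h2
    refine (hC z (by linarith) h1).trans ?_
    rw [mul_assoc, ← Real.exp_add]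
    gcongr; linarith

/-- the real derivatives -/
lemma iter_real (n : ℕ) : ∀ x : ℝ, 0 < x → 
    ((iteratedDeriv n (fun t : ℝ => t / (Real.exp t - 1)) x : ℝ) : ℂ) = iteratedDeriv n FF x := by
  induction n with
  | zero => 
    intro x hx
    simp only [iteratedDeriv_zero]
    rw [FF_eq _ (by exact_mod_cast hx.ne')]; push_cast; rfl
  | succ n ih =>
    intro x hx
    rw [iteratedDeriv_succ, iteratedDeriv_succ]
    have hd := (FF_iter_diffAt n x (by simp)).hasDerivAt
    have hd1 := hd.comp_ofReal
    have hd2 := hd.real_of_complex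
    have he : (fun t : ℝ => (iteratedDeriv n FF t).re) =ᶠ[nhds x] 
       iteratedDeriv n (fun t : ℝ => t / (Real.exp t - 1)) := by
      filter_upwards [lt_mem_nhds hx] with t ht
      rw [← ih t ht]; simp
    have hd3 := hd2.congr_of_eventuallyEq he.symm
    have hd4 := hd3.ofReal_comp
    have hd5 := hd1.congr_of_eventuallyEq (f₁ := fun t : ℝ => ((iteratedDeriv n (fun t : ℝ => t / (Real.exp t - 1)) t : ℝ) : ℂ)) (by
      filter_upwards [lt_mem_nhds hx] with t ht using ih t ht)
    rw [hd3.deriv]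
    exact hd4.unique hd5

noncomputable def AA (n : ℕ) (x : ℝ) : ℂ := iteratedDeriv n FF x

lemma AA_hasDerivAt (n : ℕ) (x : ℝ) : HasDerivAt (AA n) (AA (n+1) x) x := by
  have := (FF_iter_diffAt n x (by simp)).hasDerivAt.comp_ofReal
  rw [← iteratedDeriv_succ] at this
  exact this

lemma AA_cont (n : ℕ) : Continuous (AA n) :=
  continuous_iff_continuousAt.2 fun x => (AA_hasDerivAt n x).continuousAt

lemma AA_locInt (n : ℕ) : LocallyIntegrableOn (AA n) (Set.Ioi 0) :=
  (AA_cont n).locallyIntegrable.locallyIntegrableOn _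

lemma AA_top (n : ℕ) : AA n =O[Filter.atTop] fun t => Real.exp (-(1/2) * t) := by
  obtain ⟨C, hC⟩ := FF_iter_bound n
  refine Asymptotics.IsBigO.of_bound C ?_
  filter_upwards [Filter.eventually_ge_atTop 0] with x hx
  simpa [AA] using hC x hx

lemma AA_bot (n : ℕ) : AA n =O[nhdsWithin 0 (Set.Ioi 0)] fun t : ℝ => t ^ (-(0:ℝ)) := by
  simp only [neg_zero, Real.rpow_zero]
  exact ((AA_cont n).continuousAt.tendsto.mono_left nhdsWithin_le_nhds).isBigO_one ℝ

lemma AA_conv (n : ℕ) (s : ℂ) (hs : 0 < s.re) : MellinConvergent (AA n) s :=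
  mellinConvergent_of_isBigO_rpow_exp (by norm_num) (AA_locInt n) (AA_top n) (AA_bot n) hs

lemma AA_diff (n : ℕ) (s : ℂ) (hs : 0 < s.re) : DifferentiableAt ℂ (mellin (AA n)) s :=
  mellin_differentiableAt_of_isBigO_rpow_exp (by norm_num) (AA_locInt n) (AA_top n) (AA_bot n) hs

lemma AA_ibp (n : ℕ) (w : ℂ) (hw : 0 < w.re) :
    mellin (AA (n+1)) (w+1) = -w * mellin (AA n) w := by
  have hw0 : w ≠ 0 := by rintro rfl; simp at hw
  have h1 := AA_conv (n+1) (w+1) (by simp; linarith)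
  have h2 := AA_conv n w hw
  have h3 := integral_Ioi_of_hasDerivAt_of_tendsto (a := 0) (m := 0)
    (f := fun x : ℝ => (x:ℂ)^w * AA n x)
    (f' := fun x : ℝ => w * ((x:ℂ)^(w-1) • AA n x) + (x:ℂ)^(w+1-1) • AA (n+1) x) ?_ ?_ ?_ ?_
  · rw [integral_add (h2.const_mul w) h1, integral_const_mul] at h3
    simp only [ofReal_zero, zero_cpow hw0, zero_mul, sub_zero] at h3
    simp only [mellin]
    linear_combination h3
  · refine ContinuousAt.continuousWithinAt ?_
    exact (Complex.continuousAt_ofReal_cpow_const 0 w (Or.inl hw)).mul (AA_cont n).continuousAt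
  · intro x hx
    have := (hasDerivAt_ofReal_cpow_const (ne_of_gt hx) hw0).mul (AA_hasDerivAt n x)
    refine this.congr_deriv ?_
    simp only [smul_eq_mul, add_sub_cancel_right]; ring
  · exact (h2.const_mul w).add h1
  · obtain ⟨C, hC⟩ := FF_iter_bound n
    have ht := (tendsto_rpow_mul_exp_neg_mul_atTop_nhds_zero w.re (1/2) (by norm_num)).const_mul C
    rw [mul_zero] at ht
    refine squeeze_zero_norm' ?_ ht
    filter_upwards [Filter.eventually_gt_atTop 0] with x hx
    rw [norm_mul, Complex.norm_cpow_eq_rpow_re_of_pos hx]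
    calc _ ≤ x ^ w.re * (C * Real.exp (-(1/2) * x)) := by gcongr; exact hC x hx.le
      _ = _ := by ring

lemma zeta_base (s : ℂ) (hs : 1 < s.re) :
    mellin (AA 0) (s - 1) = Complex.Gamma s * riemannZeta s := by
  have h := hasSum_mellin (ι := ℕ) (a := fun _ => 1) (p := fun i => (i:ℝ)+1)
    (F := fun t : ℝ => (1 / (Complex.exp t - 1) : ℂ)) (s := s) (fun i => Or.inr (by positivity))
    (by linarith) ?_ ?_
  · have h2 : mellin (fun t : ℝ => (1 / (Complex.exp t - 1) : ℂ)) s = mellin (AA 0) (s - 1) := by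
      refine setIntegral_congr_fun measurableSet_Ioi (fun t ht => ?_)
      have ht0 : (t:ℂ) ≠ 0 := by exact_mod_cast (ne_of_gt ht)
      simp only [AA, iteratedDeriv_zero, FF_eq _ ht0, smul_eq_mul]
      rw [cpow_sub (s-1) 1 ht0, cpow_one]
      field_simp
    rw [← h2, ← h.tsum_eq, zeta_eq_tsum_one_div_nat_add_one_cpow hs, ← tsum_mul_left]
    refine tsum_congr fun i => ?_
    push_cast; ring
  · intro t ht
    have ht : 0 < t := ht
    have hr : Real.exp (-t) < 1 := by rw [Real.exp_lt_one_iff]; linarith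
    have hg := (hasSum_geometric_of_lt_one (Real.exp_pos (-t)).le hr).mul_left (Real.exp (-t))
    have hg2 := Complex.hasSum_ofReal.2 hg
    convert hg2 using 1
    · ext i
      rw [← Real.exp_nat_mul, ← Real.exp_add, one_mul]
      congr 2; ring
    · have : Real.exp t - 1 ≠ 0 := by
        have := Real.add_one_lt_exp ht.ne'
        linarith
      have h' : (1:ℝ) / (Real.exp t - 1) = Real.exp (-t) * (1 - Real.exp (-t))⁻¹ := by
        rw [Real.exp_neg]
        have := Real.exp_pos t
        have h4 : 1 - (Real.exp t)⁻¹ = (Real.exp t - 1) / Real.exp t := by field_simp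
        rw [h4]; field_simp
      rw [← h']; push_cast; rfl
  · have := (summable_nat_add_iff 1).2 (Real.summable_one_div_nat_rpow.2 hs)
    simpa using this

noncomputable def ZZ : ℂ → ℂ := Function.update (fun s => (s - 1) * riemannZeta s) 1 1

lemma ZZ_diff : Differentiable ℂ ZZ := by
  have h1 : ∀ s : ℂ, s ≠ 1 → DifferentiableAt ℂ ZZ s := by
    intro s hs
    apply DifferentiableAt.congr_of_eventuallyEq
      (f := fun s => (s - 1) * riemannZeta s)
    · exact (by fun_prop : DifferentiableAt ℂ (fun s : ℂ => s - 1) s).mul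
        (differentiableAt_riemannZeta hs)
    · filter_upwards [eventually_ne_nhds hs] with t ht using Function.update_of_ne ht ..
  intro s
  by_cases hs : s = 1
  · subst hs
    refine (Complex.analyticAt_of_differentiable_on_punctured_nhds_of_continuousAt
      ?_ ?_).differentiableAt
    · filter_upwards [self_mem_nhdsWithin] with t ht using h1 t ht
    · rw [ZZ, continuousAt_update_same]
      exact riemannZeta_residue_one
  · exact h1 s hs

lemma AA_one (s : ℂ) (hs : 0 < s.re) : mellin (AA 1) s = -(Complex.Gamma s * ZZ s) := by
  have hU : IsOpen {s : ℂ | 0 < s.re} := isOpen_lt continuous_const continuous_re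
  have hc : IsPreconnected {s : ℂ | 0 < s.re} := (convex_halfSpace_re_gt 0).isPreconnected
  have e1 : AnalyticOnNhd ℂ (mellin (AA 1)) {s : ℂ | 0 < s.re} :=
    DifferentiableOn.analyticOnNhd (fun s hs => (AA_diff 1 s hs).differentiableWithinAt) hU
  have e2 : AnalyticOnNhd ℂ (fun s => -(Complex.Gamma s * ZZ s)) {s : ℂ | 0 < s.re} := by
    refine DifferentiableOn.analyticOnNhd (fun s hs => ?_) hU
    refine (DifferentiableAt.neg (DifferentiableAt.mul ?_ (ZZ_diff s))).differentiableWithinAt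
    refine Complex.differentiableAt_Gamma s fun m h => ?_
    rw [h] at hs
    simp at hs
    linarith [(Nat.cast_nonneg m : (0:ℝ) ≤ m)]
  refine e1.eqOn_of_preconnected_of_eventuallyEq e2 hc (z₀ := 2) (by simp) ?_ hs
  have : {s : ℂ | 1 < s.re} ∈ nhds (2:ℂ) :=
    (isOpen_lt continuous_const continuous_re).mem_nhds (by simp)
  filter_upwards [this] with t ht
  have ht : 1 < t.re := ht
  have h := AA_ibp 0 (t-1) (by simpa using ht)
  rw [zeta_base t ht, sub_add_cancel] at h
  have ht1 : t ≠ 1 := by rintro rfl; simp at ht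
  rw [zero_add] at h
  rw [h, ZZ, Function.update_of_ne ht1]; ring

lemma AA_n (n : ℕ) (s : ℂ) (hs : 0 < s.re) (hs1 : s ≠ 1) :
    mellin (AA (n+1)) (n + s) =
      (-1 : ℂ) ^ (n+1) * (s - 1) * Complex.Gamma (n + s) * riemannZeta s := by
  induction n with
  | zero =>
    simp only [zero_add, Nat.cast_zero]
    rw [AA_one s hs, ZZ, Function.update_of_ne hs1]; ring
  | succ n ih =>
    have hp : 0 < ((n:ℂ) + s).re := by
      simp; positivity
    have h0 : (n:ℂ) + s ≠ 0 := by intro h; rw [h] at hp; simp at hp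
    have e : ((n+1 : ℕ) : ℂ) + s = (n + s) + 1 := by push_cast; ring
    rw [e, AA_ibp (n+1) _ hp, ih, Complex.Gamma_add_one _ h0]; ring

theorem integral_iteratedDeriv_zeta (n : ℕ) (hn : 1 ≤ n) (s : ℂ) (hs : 0 < s.re)
    (hs1 : s ≠ 1) :
    ∫ x in Set.Ioi (0 : ℝ),
        (x : ℂ) ^ ((n : ℂ) - 2 + s) *
          ((iteratedDeriv n (fun t : ℝ => t / (Real.exp t - 1)) x : ℝ) : ℂ) =
      (-1 : ℂ) ^ n * (s - 1) * Complex.Gamma ((n : ℂ) - 1 + s) * riemannZeta s := by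
  obtain ⟨m, rfl⟩ : ∃ m, n = m + 1 := ⟨n - 1, by omega⟩
  have e : ((m + 1 : ℕ) : ℂ) - 1 + s = m + s := by push_cast; ring
  rw [e, ← AA_n m s hs hs1]
  refine setIntegral_congr_fun measurableSet_Ioi (fun x hx => ?_)
  simp only [smul_eq_mul]
  rw [iter_real (m+1) x hx]
  have e' : ((m + 1 : ℕ) : ℂ) - 2 + s = m + s - 1 := by push_cast; ring
  rw [e']; rfl
end

section
/- For every complex s with 0 < Re(s) < 1, ∫_0^∞ x^{s−1} · ( 1/(e^x − e^{−x}) − 1/(2x) ) dx = (1 − 2^{−s}) Γ(s) ζ(s). (Note 1/(e^x − e^{−x}) = (1/2)·csch(x).) -/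
open Complex Real MeasureTheory

open Filter Topology Asymptotics Set in
lemma csz_hbound {x : ℝ} (hx : 0 < x) : 0 < Real.exp x - 1 ∧ x ≤ Real.exp x - 1 := by
  have := Real.add_one_le_exp x
  constructor <;> linarith

lemma csz_sinh {x : ℝ} (hx : 0 < x) : 2 * x ≤ Real.exp x - Real.exp (-x) := by
  have := Real.self_le_sinh_iff.mpr hx.le
  rw [Real.sinh_eq] at this
  linarith

open Filter Topology Asymptotics Set in
lemma csz_mellin_h {s : ℂ} (hs : 1 < s.re) :
    HasMellin (fun t : ℝ => ((1 / (Real.exp t - 1) : ℝ) : ℂ)) s (Complex.Gamma s * riemannZeta s) := by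
  refine ⟨?_, ?_⟩
  · refine mellinConvergent_of_isBigO_rpow_exp (a := 1) (b := 1) one_pos ?_ ?_ ?_ hs
    · refine ContinuousOn.locallyIntegrableOn ?_ measurableSet_Ioi
      refine Complex.continuous_ofReal.comp_continuousOn ?_
      refine ContinuousOn.div continuousOn_const (by fun_prop) ?_
      intro x hx
      exact (csz_hbound hx).1.ne'
    · refine IsBigO.of_bound 2 ?_
      filter_upwards [eventually_ge_atTop (1:ℝ)] with x hx
      have h1 := csz_hbound (by linarith : 0 < x)
      have h2 := Real.add_one_le_exp x
      rw [Complex.norm_real, Real.norm_of_nonneg (by have := h1.1; positivity),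
        Real.norm_of_nonneg (by positivity), neg_one_mul, Real.exp_neg, ← div_eq_mul_inv,
        div_le_div_iff₀ h1.1 (Real.exp_pos x)]
      linarith
    · refine IsBigO.of_bound 1 ?_
      filter_upwards [self_mem_nhdsWithin] with x hx
      have hx : 0 < x := hx
      have h1 := csz_hbound hx
      rw [Complex.norm_real, Real.norm_of_nonneg (by have := h1.1; positivity),
        Real.norm_of_nonneg (by positivity), Real.rpow_neg_one, one_mul, ← one_div]
      exact one_div_le_one_div_of_le hx h1.2
  · have key := hasSum_mellin (ι := ℕ) (a := fun _ => 1) (p := fun n => (n:ℝ) + 1) (s := s)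
      (F := fun t : ℝ => ((1 / (Real.exp t - 1) : ℝ) : ℂ)) (fun i => Or.inr (by positivity))
      (by linarith) ?_ ?_
    · rw [← key.tsum_eq, zeta_eq_tsum_one_div_nat_add_one_cpow hs, ← tsum_mul_left]
      congr 1
      ext n
      push_cast
      ring
    · intro t ht
      have ht : 0 < t := ht
      have h1 := csz_hbound ht
      have hr : Real.exp (-t) < 1 := by simpa using ht
      have := (hasSum_geometric_of_lt_one (Real.exp_pos (-t)).le hr).mul_left (Real.exp (-t))
      have h2 : Real.exp (-t) * (1 - Real.exp (-t))⁻¹ = 1 / (Real.exp t - 1) := by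
        have h3 := h1.1.ne'
        have h4 := (Real.exp_pos t).ne'
        rw [Real.exp_neg]
        have : 1 - (Real.exp t)⁻¹ = (Real.exp t - 1) / Real.exp t := by field_simp
        rw [this, inv_div]
        field_simp
      rw [h2] at this
      have := (Complex.hasSum_ofReal (L := .unconditional ℕ)).mpr this
      convert this using 1
      ext n
      rw [one_mul, ← Real.exp_nat_mul, ← Real.exp_add]
      congr 2
      ring
    · have := (summable_nat_add_iff 1).mpr (Real.summable_one_div_nat_rpow.mpr hs)
      simpa using this

/-- regularised function -/
noncomputable def cszG (t : ℝ) : ℂ :=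
  ((1 / (Real.exp t - Real.exp (-t)) : ℝ) : ℂ) - (1 / 2 : ℂ) *
    Set.indicator (Set.Ioc 0 1) (fun t : ℝ => (t : ℂ) ^ (-1 : ℂ)) t

open Filter Topology Asymptotics Set in
lemma csz_G_loc : LocallyIntegrableOn cszG (Ioi 0) := by
  have h1 : LocallyIntegrableOn (fun t : ℝ => ((1 / (Real.exp t - Real.exp (-t)) : ℝ) : ℂ)) (Ioi 0) := by
    refine ContinuousOn.locallyIntegrableOn ?_ measurableSet_Ioi
    refine Complex.continuous_ofReal.comp_continuousOn ?_
    refine ContinuousOn.div continuousOn_const (by fun_prop) ?_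
    intro x hx
    have hx : 0 < x := hx
    have := csz_sinh hx
    exact (by linarith : 0 < Real.exp x - Real.exp (-x)).ne'
  have h2 : LocallyIntegrableOn (fun t : ℝ => (1 / 2 : ℂ) * (t : ℂ) ^ (-1 : ℂ)) (Ioi 0) := by
    refine ContinuousOn.locallyIntegrableOn ?_ measurableSet_Ioi
    refine continuousOn_const.mul fun t ht ↦ ?_
    exact (Complex.continuousAt_ofReal_cpow_const _ _ (Or.inr (ne_of_gt ht))).continuousWithinAt
  have h3 : LocallyIntegrableOn (indicator (Ioc 0 1) (fun t : ℝ => (1 / 2 : ℂ) * (t : ℂ) ^ (-1 : ℂ)))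
      (Ioi 0) := by
    intro x hx
    obtain ⟨u, hu, hu'⟩ := h2 x hx
    exact ⟨u, hu, hu'.indicator measurableSet_Ioc⟩
  have h4 := h1.sub h3
  convert h4 using 1
  ext t
  simp only [cszG, indicator, Pi.sub_apply]
  split_ifs <;> simp

open Filter Topology Asymptotics Set in
lemma csz_G_top : cszG =O[atTop] fun t => Real.exp (-(1:ℝ) * t) := by
  refine IsBigO.of_bound 2 ?_
  filter_upwards [eventually_gt_atTop (1:ℝ)] with x hx
  have h0 : x ∉ Ioc (0:ℝ) 1 := fun h => absurd h.2 (not_le.mpr hx)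
  have h1 := csz_sinh (by linarith : 0 < x)
  have h2 := Real.add_one_le_exp x
  have h3 : Real.exp (-x) ≤ 1 := by simp; linarith
  have h4 : 0 < Real.exp x - Real.exp (-x) := by linarith
  rw [cszG, indicator_of_notMem h0, mul_zero, sub_zero, Complex.norm_real,
    Real.norm_of_nonneg (by positivity),
    Real.norm_of_nonneg (by positivity), neg_one_mul]
  have h5 : 2 * Real.exp (-x) = 2 / Real.exp x := by rw [Real.exp_neg]; rfl
  rw [h5, div_le_div_iff₀ h4 (Real.exp_pos x)]
  linarith

open Filter Topology Asymptotics Set in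
lemma csz_G_bot : cszG =O[𝓝[>] 0] fun t : ℝ => t ^ (-(0:ℝ)) := by
  refine IsBigO.of_bound 1 ?_
  filter_upwards [Ioc_mem_nhdsGT (zero_lt_one (α := ℝ))] with x hx
  have h1 := csz_sinh hx.1
  have hx0 := hx.1
  have h4 : 0 < Real.exp x - Real.exp (-x) := by linarith
  have e1 := abs_le.mp (Real.abs_exp_sub_one_sub_id_le (x := x) (by rw [abs_of_pos hx0]; exact hx.2))
  have e2 := abs_le.mp (Real.abs_exp_sub_one_sub_id_le (x := -x)
    (by rw [abs_neg, abs_of_pos hx0]; exact hx.2))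
  have : cszG x = ((1 / (Real.exp x - Real.exp (-x)) - 1 / (2 * x) : ℝ) : ℂ) := by
    rw [cszG, indicator_of_mem hx, Complex.cpow_neg_one]
    push_cast
    ring
  rw [this, Complex.norm_real, neg_zero, Real.rpow_zero, norm_one, mul_one, Real.norm_eq_abs,
    abs_sub_comm, abs_of_nonneg (sub_nonneg.mpr (one_div_le_one_div_of_le (by positivity) h1)),
    div_sub_div _ _ (by positivity) h4.ne', div_le_one (by positivity)]
  nlinarith

lemma csz_G_conv {s : ℂ} (hs : 0 < s.re) : MellinConvergent cszG s :=
  mellinConvergent_of_isBigO_rpow_exp one_pos csz_G_loc csz_G_top csz_G_bot hs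

lemma csz_G_diff {s : ℂ} (hs : 0 < s.re) : DifferentiableAt ℂ (mellin cszG) s :=
  mellin_differentiableAt_of_isBigO_rpow_exp one_pos csz_G_loc csz_G_top csz_G_bot hs

open Set in
lemma csz_one_lt {s : ℂ} (hs : 1 < s.re) :
    mellin cszG s = (1 - (2 : ℂ) ^ (-s)) * Complex.Gamma s * riemannZeta s
      - (1 / 2) * (1 / (s - 1)) := by
  have hh := csz_mellin_h hs
  have hh2 := (MellinConvergent.comp_mul_left (a := 2) two_pos).mpr hh.1
  have e2 := mellin_comp_mul_left (fun t : ℝ => ((1 / (Real.exp t - 1) : ℝ) : ℂ)) s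
    (a := 2) two_pos
  have hi := hasMellin_cpow_Ioc (-1) (s := s) (by simp; linarith)
  have hi2 := hasMellin_const_smul hi.1 (1 / 2 : ℂ)
  have d1 := hasMellin_sub hh.1 hh2
  have d2 := hasMellin_sub d1.1 hi2.1
  have : mellin cszG s = mellin (fun t : ℝ => ((1 / (Real.exp t - 1) : ℝ) : ℂ) -
      ((1 / (Real.exp (2 * t) - 1) : ℝ) : ℂ) - (1 / 2 : ℂ) •
    Set.indicator (Set.Ioc 0 1) (fun t : ℝ => (t : ℂ) ^ (-1 : ℂ)) t) s := by
    refine setIntegral_congr_fun measurableSet_Ioi fun t ht => ?_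
    have ht : 0 < t := ht
    dsimp only
    rw [cszG, smul_eq_mul (a := (1/2 : ℂ)), ← Complex.ofReal_sub]
    congr 4
    have h1 := (csz_hbound ht).1
    have h2 := (csz_hbound (by linarith : 0 < 2 * t)).1
    have h3 := csz_sinh ht
    have h4 : 0 < Real.exp t - Real.exp (-t) := by linarith
    have h5 : Real.exp (2 * t) = Real.exp t ^ 2 := by rw [← Real.exp_nat_mul]; norm_num
    rw [h5] at h2 ⊢
    rw [Real.exp_neg] at h4 ⊢
    have hp := Real.exp_pos t
    generalize Real.exp t = E at *
    have h6 : E - E⁻¹ = (E ^ 2 - 1) / E := by field_simp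
    rw [h6, one_div_div, div_sub_div _ _ h1.ne' h2.ne', div_eq_div_iff h2.ne' (by positivity)]
    ring
  rw [this, d2.2, d1.2, e2, hi2.2, hi.2, hh.2]
  simp only [smul_eq_mul]
  push_cast
  ring

noncomputable def cszZ : ℂ → ℂ := Function.update (fun s => (s - 1) * riemannZeta s) 1 1

lemma cszZ_diff : Differentiable ℂ cszZ := by
  have h1 : ∀ s, s ≠ 1 → DifferentiableAt ℂ cszZ s := by
    intro s hs
    have : DifferentiableAt ℂ (fun s => (s - 1) * riemannZeta s) s :=
      (by fun_prop : DifferentiableAt ℂ (fun s : ℂ => s - 1) s).mul (differentiableAt_riemannZeta hs)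
    refine this.congr_of_eventuallyEq ?_
    filter_upwards [isOpen_ne.mem_nhds hs] with z hz
    exact Function.update_of_ne hz _ _
  intro s
  by_cases hs : s = 1
  · subst hs
    refine (Complex.analyticAt_of_differentiable_on_punctured_nhds_of_continuousAt ?_ ?_).differentiableAt
    · filter_upwards [self_mem_nhdsWithin] with z hz using h1 z hz
    · exact continuousAt_update_same.mpr riemannZeta_residue_one
  · exact h1 s hs

open Set in
lemma csz_pos {s : ℂ} (hs : 0 < s.re) (hs1 : s ≠ 1) :
    mellin cszG s = (1 - (2 : ℂ) ^ (-s)) * Complex.Gamma s * riemannZeta s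
      - (1 / 2) * (1 / (s - 1)) := by
  have hU : IsOpen {z : ℂ | 0 < z.re} := isOpen_lt continuous_const Complex.continuous_re
  have hf : AnalyticOnNhd ℂ (fun z => (z - 1) * mellin cszG z) {z : ℂ | 0 < z.re} := by
    refine DifferentiableOn.analyticOnNhd (fun z hz => ?_) hU
    exact ((by fun_prop : DifferentiableAt ℂ (fun s : ℂ => s - 1) z).mul
      (csz_G_diff hz)).differentiableWithinAt
  have hg : AnalyticOnNhd ℂ (fun z => (1 - (2 : ℂ) ^ (-z)) * Complex.Gamma z * cszZ z - 1 / 2)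
      {z : ℂ | 0 < z.re} := by
    refine DifferentiableOn.analyticOnNhd (fun z hz => ?_) hU
    have hz : 0 < z.re := hz
    have hG : DifferentiableAt ℂ Complex.Gamma z := by
      refine Complex.differentiableAt_Gamma _ fun m h => ?_
      rw [h] at hz
      simp at hz
      have : (0:ℝ) ≤ m := by positivity
      linarith
    have h2 : DifferentiableAt ℂ (fun z : ℂ => 1 - (2 : ℂ) ^ (-z)) z :=
      (differentiableAt_const _).sub
        (DifferentiableAt.const_cpow (differentiableAt_id.neg) (Or.inl two_ne_zero))
    exact (((h2.mul hG).mul (cszZ_diff z)).sub (differentiableAt_const _)).differentiableWithinAt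
  have hpc : IsPreconnected {z : ℂ | 0 < z.re} := (convex_halfSpace_re_gt 0).isPreconnected
  have key := hf.eqOn_of_preconnected_of_eventuallyEq hg hpc (z₀ := 2) (by simp) (by
    filter_upwards [(isOpen_lt continuous_const Complex.continuous_re : IsOpen {z : ℂ | 1 < z.re}).mem_nhds
      (by simp : (2:ℂ) ∈ {z : ℂ | 1 < z.re})] with z hz
    have hz : 1 < z.re := hz
    have hz1 : z ≠ 1 := by rintro rfl; simp at hz
    rw [csz_one_lt hz, cszZ, Function.update_of_ne hz1]
    have := sub_ne_zero.mpr hz1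
    field_simp) hs
  dsimp only at key
  rw [cszZ, Function.update_of_ne hs1] at key
  have := sub_ne_zero.mpr hs1
  apply mul_left_cancel₀ this
  rw [key]
  field_simp

theorem integral_csch_zeta (s : ℂ) (h0 : 0 < s.re) (h1 : s.re < 1) :
    ∫ x in Set.Ioi (0 : ℝ),
        (x : ℂ) ^ (s - 1) * ((1 / (Real.exp x - Real.exp (-x)) - 1 / (2 * x) : ℝ) : ℂ) =
      (1 - (2 : ℂ) ^ (-s)) * Complex.Gamma s * riemannZeta s := by
  have hs1 : s ≠ 1 := by rintro rfl; simp at h1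
  have hre : (s - 2).re < -1 := by simp; linarith
  have hG := csz_G_conv h0
  have hm := csz_pos h0 hs1
  have hI := integral_Ioi_cpow_of_lt hre one_pos
  have hJ := integrableOn_Ioi_cpow_of_lt hre one_pos
  have hJ' : IntegrableOn (Set.indicator (Set.Ioi 1) (fun t : ℝ => (1 / 2 : ℂ) * (t : ℂ) ^ (s - 2)))
      (Set.Ioi (0:ℝ)) :=
    ((integrable_indicator_iff measurableSet_Ioi).mpr (hJ.const_mul (1 / 2 : ℂ))).integrableOn
  have e : ∫ x in Set.Ioi (0 : ℝ),
        (x : ℂ) ^ (s - 1) * ((1 / (Real.exp x - Real.exp (-x)) - 1 / (2 * x) : ℝ) : ℂ) =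
      ∫ x in Set.Ioi (0 : ℝ), ((x : ℂ) ^ (s - 1) • cszG x -
        Set.indicator (Set.Ioi 1) (fun t : ℝ => (1 / 2 : ℂ) * (t : ℂ) ^ (s - 2)) x) := by
    refine setIntegral_congr_fun measurableSet_Ioi fun t ht => ?_
    have ht : 0 < t := ht
    have ht' : (t : ℂ) ≠ 0 := by exact_mod_cast ht.ne'
    have h2 : (t : ℂ) ^ (s - 2) = (t : ℂ) ^ (s - 1) * (t : ℂ)⁻¹ := by
      rw [← Complex.cpow_neg_one, ← Complex.cpow_add _ _ ht']
      congr 1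
      ring
    rw [cszG, smul_eq_mul]
    by_cases h : t ≤ 1
    · rw [Set.indicator_of_mem (show t ∈ Set.Ioc (0:ℝ) 1 from ⟨ht, h⟩),
        Set.indicator_of_notMem (show t ∉ Set.Ioi (1:ℝ) from not_lt.mpr h), Complex.cpow_neg_one]
      push_cast
      ring
    · rw [Set.indicator_of_notMem (show t ∉ Set.Ioc (0:ℝ) 1 from fun hh => h hh.2),
        Set.indicator_of_mem (show t ∈ Set.Ioi (1:ℝ) from not_le.mp h), h2]
      push_cast
      ring
  rw [e, integral_sub hG hJ', setIntegral_indicator measurableSet_Ioi,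
    Set.inter_eq_right.mpr (Set.Ioi_subset_Ioi zero_le_one), integral_const_mul, hI]
  change mellin cszG s - _ = _
  rw [hm]
  have h3 := sub_ne_zero.mpr hs1
  have h4 : s - 2 + 1 = s - 1 := by ring
  rw [h4]
  simp only [Complex.ofReal_one, Complex.one_cpow]
  ring
end

section
/- For every complex s with Re(s) > 0 and s ≠ 1, ∫_0^∞ ( (e^{x/2} − 1)/(e^x − 1) ) · x^{s−1} dx = (2^s − 2) Γ(s) ζ(s). -/
open Complex Real MeasureTheory

lemma aux_zeta_an : Differentiable ℂ
    (Function.update (fun z : ℂ => (z - 1) * riemannZeta z) 1 1) := by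
  have key : ∀ z : ℂ, z ≠ 1 → DifferentiableAt ℂ
      (Function.update (fun z : ℂ => (z - 1) * riemannZeta z) 1 1) z := by
    intro z hz
    have : DifferentiableAt ℂ (fun z : ℂ => (z - 1) * riemannZeta z) z :=
      (by fun_prop : DifferentiableAt ℂ (fun z : ℂ => z - 1) z).mul
        (differentiableAt_riemannZeta hz)
    refine this.congr_of_eventuallyEq ?_
    filter_upwards [eventually_ne_nhds hz] with t ht using Function.update_of_ne ht ..
  intro z
  by_cases hz : z = 1
  · subst hz
    refine (Complex.analyticAt_of_differentiable_on_punctured_nhds_of_continuousAt ?_ ?_).differentiableAt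
    · filter_upwards [self_mem_nhdsWithin] with t ht using key t ht
    · exact continuousAt_update_same.mpr riemannZeta_residue_one
  · exact key z hz

lemma aux_alt {s : ℂ} (hs : 1 < s.re) :
    ∑' n : ℕ, (-1 : ℂ) ^ n / ((n : ℂ) + 1) ^ s = (1 - 2 * (2 : ℂ) ^ (-s)) * riemannZeta s := by
  have hsum : Summable (fun n : ℕ => 1 / ((n : ℂ) + 1) ^ s) := by
    have := (summable_nat_add_iff 1).mpr (Complex.summable_one_div_nat_cpow.mpr hs)
    simpa using this
  have hE : Summable (fun k : ℕ => 1 / (((2 * k : ℕ) : ℂ) + 1) ^ s) :=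
    hsum.comp_injective (i := fun k : ℕ => 2 * k) (fun a b h => by simpa using h)
  have hO : Summable (fun k : ℕ => 1 / (((2 * k + 1 : ℕ) : ℂ) + 1) ^ s) :=
    hsum.comp_injective (i := fun k : ℕ => 2 * k + 1) (fun a b h => by simpa using h)
  have h1 := tsum_even_add_odd (f := fun n : ℕ => 1 / ((n : ℂ) + 1) ^ s) hE hO
  have hO2 : ∀ k : ℕ, 1 / (((2 * k + 1 : ℕ) : ℂ) + 1) ^ s
      = (2 : ℂ) ^ (-s) * (1 / ((k : ℂ) + 1) ^ s) := by
    intro k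
    have : (((2 * k + 1 : ℕ) : ℂ) + 1) = ((2 : ℝ) : ℂ) * (((k : ℝ) + 1 : ℝ) : ℂ) := by
      push_cast; ring
    rw [this, Complex.mul_cpow_ofReal_nonneg (by norm_num) (by positivity), Complex.cpow_neg]
    push_cast
    rw [one_div, mul_inv, one_div]
  have h2 : ∑' k : ℕ, (-1 : ℂ) ^ (2 * k) / (((2 * k : ℕ) : ℂ) + 1) ^ s
      + ∑' k : ℕ, (-1 : ℂ) ^ (2 * k + 1) / (((2 * k + 1 : ℕ) : ℂ) + 1) ^ s
      = ∑' n : ℕ, (-1 : ℂ) ^ n / ((n : ℂ) + 1) ^ s := by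
    refine tsum_even_add_odd (f := fun n : ℕ => (-1 : ℂ) ^ n / ((n : ℂ) + 1) ^ s) ?_ ?_
    · simpa [pow_mul] using hE
    · simpa [pow_mul, pow_succ, neg_div] using hO.neg
  have e1 : ∀ k : ℕ, (-1 : ℂ) ^ (2 * k) / (((2 * k : ℕ) : ℂ) + 1) ^ s
      = 1 / (((2 * k : ℕ) : ℂ) + 1) ^ s := fun k => by simp [pow_mul]
  have e2 : ∀ k : ℕ, (-1 : ℂ) ^ (2 * k + 1) / (((2 * k + 1 : ℕ) : ℂ) + 1) ^ s
      = -(1 / (((2 * k + 1 : ℕ) : ℂ) + 1) ^ s) := fun k => by simp [pow_mul, pow_succ, neg_div]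
  rw [← h2]
  simp_rw [e1, e2]
  rw [tsum_neg]
  rw [← zeta_eq_tsum_one_div_nat_add_one_cpow hs] at h1
  have h3 : ∑' k : ℕ, 1 / (((2 * k + 1 : ℕ) : ℂ) + 1) ^ s = (2 : ℂ) ^ (-s) * riemannZeta s := by
    simp_rw [hO2]
    rw [tsum_mul_left, ← zeta_eq_tsum_one_div_nat_add_one_cpow hs]
  linear_combination h1 - 2 * h3

noncomputable def auxF (t : ℝ) : ℂ := ((1 / (Real.exp (t / 2) + 1) : ℝ) : ℂ)

lemma aux_mellin {s : ℂ} (hs : 1 < s.re) :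
    mellin auxF s = ((2 : ℂ) ^ s - 2) * Complex.Gamma s * riemannZeta s := by
  have h := hasSum_mellin (a := fun n : ℕ => (-1 : ℂ) ^ n) (p := fun n : ℕ => ((n : ℝ) + 1) / 2)
    (F := auxF) (s := s) (fun i => Or.inr (by positivity)) (by linarith) ?_ ?_
  · have e : ∀ n : ℕ, Complex.Gamma s * (-1 : ℂ) ^ n / ((((n : ℝ) + 1) / 2 : ℝ) : ℂ) ^ s
        = (Complex.Gamma s * (2 : ℂ) ^ s) * ((-1 : ℂ) ^ n / ((n : ℂ) + 1) ^ s) := by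
      intro n
      rw [Complex.ofReal_div, Complex.div_cpow_ofReal_nonneg (by positivity) (by norm_num)]
      push_cast
      have : (2 : ℂ) ^ s ≠ 0 := by simp [Complex.cpow_eq_zero_iff]
      field_simp
    rw [← h.tsum_eq]
    simp_rw [e]
    rw [tsum_mul_left, aux_alt hs]
    have : (2 : ℂ) ^ s * (2 : ℂ) ^ (-s) = 1 := by
      rw [← Complex.cpow_add _ _ (by norm_num)]; simp
    linear_combination (-2 * Complex.Gamma s * riemannZeta s) * this
  · intro t ht
    have ht : 0 < t := ht
    have hr : |-Real.exp (-t / 2)| < 1 := by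
      rw [abs_neg, abs_of_pos (Real.exp_pos _), Real.exp_lt_one_iff]; linarith
    have := (hasSum_geometric_of_abs_lt_one hr).mul_left (Real.exp (-t / 2))
    have h2 := Complex.hasSum_ofReal.mpr this
    convert h2 using 1
    · ext n
      rw [neg_pow (Real.exp (-t / 2)), ← Real.exp_nat_mul, mul_left_comm, ← Real.exp_add]
      push_cast
      congr 3
      ring
    · rw [auxF]
      congr 1
      rw [neg_div, Real.exp_neg]
      have h5 := Real.exp_pos (t / 2)
      generalize Real.exp (t / 2) = y at h5
      have h6 : 1 - -y⁻¹ = (y + 1) / y := by field_simp; ring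
      rw [h6, inv_div]
      field_simp
  · have := (summable_nat_add_iff 1).mpr (Real.summable_one_div_nat_rpow.mpr hs)
    refine (this.mul_left ((2 : ℝ) ^ s.re)).congr fun n => ?_
    rw [Real.div_rpow (by positivity) (by norm_num)]
    simp [div_eq_mul_inv]

lemma aux_diff {s : ℂ} (hs : 0 < s.re) : DifferentiableAt ℂ (mellin auxF) s := by
  have hc : Continuous auxF := by
    unfold auxF
    refine Complex.continuous_ofReal.comp (Continuous.div (by fun_prop) (by fun_prop) ?_)
    intro x
    positivity
  refine mellin_differentiableAt_of_isBigO_rpow_exp (a := 1 / 2) (b := 0) (by norm_num)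
    (hc.continuousOn.locallyIntegrableOn measurableSet_Ioi) ?_ ?_ hs
  · refine Asymptotics.isBigO_of_le _ fun t => ?_
    rw [auxF, Complex.norm_real, Real.norm_of_nonneg (by positivity), Real.norm_of_nonneg (by positivity),
      neg_mul, Real.exp_neg, one_div, show 1 / 2 * t = t / 2 by ring]
    gcongr
    linarith
  · refine Asymptotics.isBigO_of_le _ fun t => ?_
    rw [auxF, Complex.norm_real, Real.norm_of_nonneg (by positivity)]
    simp only [neg_zero, Real.rpow_zero, norm_one]
    rw [div_le_one (by positivity)]
    linarith [Real.exp_pos (t / 2)]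

theorem integral_zeta_half_exp (s : ℂ) (hs : 0 < s.re) (hs1 : s ≠ 1) :
    ∫ x in Set.Ioi (0 : ℝ),
        (((Real.exp (x / 2) - 1) / (Real.exp x - 1) : ℝ) : ℂ) * (x : ℂ) ^ (s - 1) =
      ((2 : ℂ) ^ s - 2) * Complex.Gamma s * riemannZeta s := by
  have h0 : ∫ x in Set.Ioi (0 : ℝ),
        (((Real.exp (x / 2) - 1) / (Real.exp x - 1) : ℝ) : ℂ) * (x : ℂ) ^ (s - 1)
      = mellin auxF s := by
    refine setIntegral_congr_fun measurableSet_Ioi fun x hx => ?_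
    have hx : 0 < x := hx
    simp only [smul_eq_mul]
    rw [mul_comm, auxF]
    congr 2
    have h1 : 1 < Real.exp (x / 2) := Real.one_lt_exp_iff.mpr (by linarith)
    have h2 : Real.exp x = Real.exp (x / 2) * Real.exp (x / 2) := by
      rw [← Real.exp_add]; ring_nf
    rw [h2, div_eq_div_iff (by nlinarith) (by linarith)]
    ring
  rw [h0]
  set U : Set ℂ := {z | 0 < z.re} with hU
  have hUo : IsOpen U := isOpen_lt continuous_const Complex.continuous_re
  have hUc : IsPreconnected U := (convex_halfSpace_re_gt 0).isPreconnected
  have hf : AnalyticOnNhd ℂ (fun z => (z - 1) * mellin auxF z) U := by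
    refine DifferentiableOn.analyticOnNhd (fun z hz => ?_) hUo
    exact ((by fun_prop : DifferentiableAt ℂ (fun z : ℂ => z - 1) z).mul
      (aux_diff hz)).differentiableWithinAt
  have hg : AnalyticOnNhd ℂ (fun z => ((2 : ℂ) ^ z - 2) * Complex.Gamma z *
      Function.update (fun z : ℂ => (z - 1) * riemannZeta z) 1 1 z) U := by
    refine DifferentiableOn.analyticOnNhd (fun z hz => ?_) hUo
    have hz : 0 < z.re := hz
    refine DifferentiableAt.differentiableWithinAt ?_
    refine (DifferentiableAt.mul ?_ ?_).mul (aux_zeta_an z)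
    · exact (differentiableAt_id.const_cpow (Or.inl (by norm_num))).sub_const _
    · refine Complex.differentiableAt_Gamma z fun m hm => ?_
      have := congrArg Complex.re hm
      simp at this
      have h3 : (0 : ℝ) ≤ m := by positivity
      linarith
  have hev : (fun z => (z - 1) * mellin auxF z) =ᶠ[nhds (2 : ℂ)]
      (fun z => ((2 : ℂ) ^ z - 2) * Complex.Gamma z *
      Function.update (fun z : ℂ => (z - 1) * riemannZeta z) 1 1 z) := by
    have : {z : ℂ | 1 < z.re} ∈ nhds (2 : ℂ) :=
      (isOpen_lt continuous_const Complex.continuous_re).mem_nhds (by simp)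
    filter_upwards [this] with z hz
    have hz : 1 < z.re := hz
    have hz1 : z ≠ 1 := by rintro rfl; simp at hz
    rw [aux_mellin hz, Function.update_of_ne hz1]
    ring
  have := hf.eqOn_of_preconnected_of_eventuallyEq hg hUc (show (2 : ℂ) ∈ U by simp [hU]) hev hs
  simp only [Function.update_of_ne hs1] at this
  refine mul_left_cancel₀ (sub_ne_zero.mpr hs1) ?_
  linear_combination this
end

section
/- For every complex s with Re(s) > 0 and s ≠ 1, the series Σ_{k=1}^∞ [ (6k−5)^{−s} − 2·(6k−3)^{−s} + (6k−1)^{−s} ] converges and its sum equals (1 − 3^{1−s})(1 − 2^{−s}) ζ(s). -/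
open Complex Finset

lemma z6_group3 (g : ℕ → ℂ) (a : ℂ) (h : HasSum g a) :
    HasSum (fun k : ℕ => g (3 * k) + g (3 * k + 1) + g (3 * k + 2)) a := by
  have h1 := (Equiv.hasSum_iff (Nat.divModEquiv 3).symm).mpr h
  refine (h1.prod_fiberwise (g := fun k : ℕ => g (3 * k) + g (3 * k + 1) + g (3 * k + 2)) ?_)
  intro k
  have := hasSum_fintype (fun c : Fin 3 => (g ∘ (Nat.divModEquiv 3).symm) (k, c))
  convert this using 1
  simp [Fin.sum_univ_three, Nat.divModEquiv, mul_comm]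

lemma z6_re_gt_one (s : ℂ) (hs : 1 < s.re) :
    HasSum
      (fun k : ℕ =>
        ((6 * (k + 1) - 5 : ℕ) : ℂ) ^ (-s) - 2 * ((6 * (k + 1) - 3 : ℕ) : ℂ) ^ (-s) +
          ((6 * (k + 1) - 1 : ℕ) : ℂ) ^ (-s))
      ((1 - (3 : ℂ) ^ (1 - s)) * (1 - (2 : ℂ) ^ (-s)) * riemannZeta s) := by
  set f : ℕ → ℂ := fun n => (n : ℂ) ^ (-s) with hf
  have hmul : ∀ m n : ℕ, f (m * n) = f m * f n := fun m n => by
    simp only [hf, Nat.cast_mul]; exact natCast_mul_natCast_cpow m n _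
  have hsum : HasSum f (riemannZeta s) := by
    have e : f = fun n : ℕ => 1 / (n : ℂ) ^ s := by
      funext n; simp [hf, cpow_neg]
    rw [e, zeta_eq_tsum_one_div_nat_cpow hs]
    exact (Complex.summable_one_div_nat_cpow.mpr hs).hasSum
  have hE : HasSum (fun n => f (2 * n)) (f 2 * riemannZeta s) := by
    simp only [hmul]; exact hsum.mul_left _
  have hOs : Summable (fun n => f (2 * n + 1)) :=
    hsum.summable.comp_injective (i := fun n => 2 * n + 1) (fun a b h => by simpa using h)
  obtain ⟨o, hO⟩ := hOs
  have ho : o = (1 - f 2) * riemannZeta s := by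
    have := (hE.even_add_odd hO).unique hsum
    linear_combination this
  have h3 : HasSum (fun n => f (3 * (2 * n + 1))) (f 3 * o) := by
    simp only [hmul 3]; exact hO.mul_left _
  have hg := z6_group3 _ _ hO
  have := hg.sub (h3.mul_left 3)
  have e3 : (3 : ℂ) ^ (1 - s) = 3 * f 3 := by
    rw [sub_eq_add_neg, cpow_add _ _ (by norm_num)]; simp [hf]
  have e2 : (2 : ℂ) ^ (-s) = f 2 := by simp [hf]
  convert this using 1
  · rfl
  · funext k
    have a1 : 6 * (k + 1) - 5 = 2 * (3 * k) + 1 := by omega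
    have a2 : 6 * (k + 1) - 3 = 3 * (2 * k + 1) := by omega
    have a3 : 6 * (k + 1) - 1 = 2 * (3 * k + 2) + 1 := by omega
    have a4 : 2 * (3 * k + 1) + 1 = 3 * (2 * k + 1) := by omega
    rw [a1, a2, a3, a4]
    change f _ - 2 * f _ + f _ = _
    ring
  · rw [e3, e2, ho]; ring

lemma z6_diff (s : ℂ) (ε M : ℝ) (hε : 0 < ε) (h1 : ε ≤ s.re) (h2 : ‖s‖ ≤ M)
    (c a b : ℝ) (hc : 1 ≤ c) (ha : c ≤ a) (hb : c ≤ b) :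
    ‖(b : ℂ) ^ (-s) - (a : ℂ) ^ (-s)‖ ≤ M * c ^ (-(ε + 1)) * |b - a| := by
  have hs0 : -s ≠ 0 := by
    intro h
    have : s = 0 := by simpa using h
    rw [this] at h1; simp at h1; linarith
  refine Convex.norm_image_sub_le_of_norm_hasDerivWithin_le (s := Set.Ici c)
    (f := fun x : ℝ => (x : ℂ) ^ (-s)) (f' := fun x : ℝ => (-s) * (x : ℂ) ^ (-s - 1))
    ?_ ?_ (convex_Ici c) ha hb
  · intro x hx
    have hx : c ≤ x := hx
    exact (hasDerivAt_ofReal_cpow_const (by linarith) hs0).hasDerivWithinAt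
  · intro x hx
    have hx : c ≤ x := hx
    have hx0 : 0 < x := by linarith
    rw [norm_mul, norm_neg, norm_cpow_eq_rpow_re_of_pos hx0]
    have e : (-s - 1).re = -(s.re + 1) := by simp; ring
    rw [e]
    have k1 : x ^ (-(s.re + 1)) ≤ x ^ (-(ε + 1)) :=
      Real.rpow_le_rpow_of_exponent_le (by linarith) (by linarith)
    have k2 : x ^ (-(ε + 1)) ≤ c ^ (-(ε + 1)) :=
      Real.rpow_le_rpow_of_nonpos (by linarith) hx (by linarith)
    exact mul_le_mul h2 (k1.trans k2) (by positivity) ((norm_nonneg _).trans h2)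

lemma z6_bound (s : ℂ) (ε M : ℝ) (hε : 0 < ε) (h1 : ε ≤ s.re) (h2 : ‖s‖ ≤ M) (k : ℕ) :
    ‖((6 * (k + 1) - 5 : ℕ) : ℂ) ^ (-s) - 2 * ((6 * (k + 1) - 3 : ℕ) : ℂ) ^ (-s) +
          ((6 * (k + 1) - 1 : ℕ) : ℂ) ^ (-s)‖ ≤ 4 * M * ((k + 1 : ℕ) : ℝ) ^ (-(ε + 1)) := by
  have a1 : 6 * (k + 1) - 5 = 6 * k + 1 := by omega
  have a2 : 6 * (k + 1) - 3 = 6 * k + 3 := by omega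
  have a3 : 6 * (k + 1) - 1 = 6 * k + 5 := by omega
  rw [a1, a2, a3]
  have hk : (0 : ℝ) ≤ k := k.cast_nonneg
  have b1 := z6_diff s ε M hε h1 h2 ((k + 1 : ℕ) : ℝ) ((6 * k + 3 : ℕ) : ℝ) ((6 * k + 1 : ℕ) : ℝ)
    (by push_cast; linarith) (by push_cast; linarith) (by push_cast; linarith)
  have b2 := z6_diff s ε M hε h1 h2 ((k + 1 : ℕ) : ℝ) ((6 * k + 3 : ℕ) : ℝ) ((6 * k + 5 : ℕ) : ℝ)
    (by push_cast; linarith) (by push_cast; linarith) (by push_cast; linarith)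
  have c1 : |((6 * k + 1 : ℕ) : ℝ) - ((6 * k + 3 : ℕ) : ℝ)| = 2 := by
    push_cast; rw [show (6 * (k : ℝ) + 1 - (6 * k + 3)) = -2 by ring]; norm_num
  have c2 : |((6 * k + 5 : ℕ) : ℝ) - ((6 * k + 3 : ℕ) : ℝ)| = 2 := by
    push_cast; rw [show (6 * (k : ℝ) + 5 - (6 * k + 3)) = 2 by ring]; norm_num
  rw [c1] at b1
  rw [c2] at b2
  simp only [ofReal_natCast] at b1 b2
  have e : ((6 * k + 1 : ℕ) : ℂ) ^ (-s) - 2 * ((6 * k + 3 : ℕ) : ℂ) ^ (-s) +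
          ((6 * k + 5 : ℕ) : ℂ) ^ (-s) =
      (((6 * k + 1 : ℕ) : ℂ) ^ (-s) - ((6 * k + 3 : ℕ) : ℂ) ^ (-s)) +
      (((6 * k + 5 : ℕ) : ℂ) ^ (-s) - ((6 * k + 3 : ℕ) : ℂ) ^ (-s)) := by ring
  rw [e]
  refine (norm_add_le _ _).trans ((add_le_add b1 b2).trans (le_of_eq ?_))
  ring

lemma z6_summable_bound (ε M : ℝ) (hε : 0 < ε) :
    Summable (fun k : ℕ => 4 * M * ((k + 1 : ℕ) : ℝ) ^ (-(ε + 1))) := by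
  apply Summable.mul_left
  exact (summable_nat_add_iff (f := fun n : ℕ => (n : ℝ) ^ (-(ε + 1))) 1).mpr
    (Real.summable_nat_rpow.mpr (by linarith))

theorem zeta_six_period_series (s : ℂ) (hs : 0 < s.re) (hs1 : s ≠ 1) :
    HasSum
      (fun k : ℕ =>
        ((6 * (k + 1) - 5 : ℕ) : ℂ) ^ (-s) - 2 * ((6 * (k + 1) - 3 : ℕ) : ℂ) ^ (-s) +
          ((6 * (k + 1) - 1 : ℕ) : ℂ) ^ (-s))
      ((1 - (3 : ℂ) ^ (1 - s)) * (1 - (2 : ℂ) ^ (-s)) * riemannZeta s) := by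
  set F : ℕ → ℂ → ℂ := fun k s =>
        ((6 * (k + 1) - 5 : ℕ) : ℂ) ^ (-s) - 2 * ((6 * (k + 1) - 3 : ℕ) : ℂ) ^ (-s) +
          ((6 * (k + 1) - 1 : ℕ) : ℂ) ^ (-s) with hF
  have hsumm : Summable (fun k => F k s) :=
    Summable.of_norm_bounded (z6_summable_bound s.re ‖s‖ hs)
      (fun k => z6_bound s s.re ‖s‖ hs le_rfl le_rfl k)
  have hFd : ∀ k, Differentiable ℂ (F k) := by
    intro k
    have n1 : ((6 * (k + 1) - 5 : ℕ) : ℂ) ≠ 0 := by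
      rw [Nat.cast_ne_zero]; omega
    have n2 : ((6 * (k + 1) - 3 : ℕ) : ℂ) ≠ 0 := by
      rw [Nat.cast_ne_zero]; omega
    have n3 : ((6 * (k + 1) - 1 : ℕ) : ℂ) ≠ 0 := by
      rw [Nat.cast_ne_zero]; omega
    intro z
    exact ((differentiableAt_id.neg.const_cpow (Or.inl n1)).sub
      ((differentiableAt_id.neg.const_cpow (Or.inl n2)).const_mul 2)).add
      (differentiableAt_id.neg.const_cpow (Or.inl n3))
  set U : Set ℂ := {z | 0 < z.re} with hU
  have hUo : IsOpen U := isOpen_lt continuous_const continuous_re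
  have hUc : Convex ℝ U := convex_halfSpace_re_gt 0
  have hGd : DifferentiableOn ℂ (fun w => ∑' k, F k w) U := by
    intro z hz
    have hz : 0 < z.re := hz
    set V : Set ℂ := {w | z.re / 2 < w.re} ∩ {w | ‖w‖ < ‖z‖ + 1} with hV
    have hVo : IsOpen V := (isOpen_lt continuous_const continuous_re).inter
      (isOpen_lt continuous_norm continuous_const)
    have hzV : z ∈ V := ⟨by simp; linarith, by simp⟩
    have := differentiableOn_tsum_of_summable_norm (F := F) (U := V)
      (z6_summable_bound (z.re / 2) (‖z‖ + 1) (by linarith))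
      (fun k => (hFd k).differentiableOn) hVo
      (fun k w hw => z6_bound w (z.re / 2) (‖z‖ + 1) (by linarith) (le_of_lt hw.1) (le_of_lt hw.2) k)
    exact (this.differentiableAt (hVo.mem_nhds hzV)).differentiableWithinAt
  have key : Set.EqOn (fun w => (w - 1) * ∑' k, F k w)
      (fun w => (1 - (3 : ℂ) ^ (1 - w)) * (1 - (2 : ℂ) ^ (-w)) * riemannZeta₁ w) U := by
    refine AnalyticOnNhd.eqOn_of_preconnected_of_eventuallyEq (𝕜 := ℂ) (z₀ := 2)
      (DifferentiableOn.analyticOnNhd ?_ hUo) (DifferentiableOn.analyticOnNhd ?_ hUo)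
      hUc.isPreconnected (by simp [hU]) ?_
    · exact (differentiableOn_id.sub_const 1).mul hGd
    · have d1 : Differentiable ℂ (fun w : ℂ => (3 : ℂ) ^ (1 - w)) := fun w =>
        (differentiableAt_id.const_sub 1).const_cpow (Or.inl (by norm_num))
      have d2 : Differentiable ℂ (fun w : ℂ => (2 : ℂ) ^ (-w)) := fun w =>
        differentiableAt_id.neg.const_cpow (Or.inl (by norm_num))
      exact (((d1.const_sub 1).mul (d2.const_sub 1)).mul
        differentiable_riemannZeta₁).differentiableOn
    · have : {w : ℂ | 1 < w.re} ∈ nhds (2 : ℂ) :=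
        (isOpen_lt continuous_const continuous_re).mem_nhds (by simp)
      filter_upwards [this] with w hw
      have hw : 1 < w.re := hw
      have hw1 : w ≠ 1 := by rintro rfl; simp at hw
      have hw2 : w - 1 ≠ 0 := sub_ne_zero.mpr hw1
      have := (z6_re_gt_one w hw).tsum_eq
      change ∑' k, F k w = _ at this
      rw [this, riemannZeta_eq_inv_sub_mul hw1]
      field_simp
  have hk := key hs
  simp only at hk
  have hw2 : s - 1 ≠ 0 := sub_ne_zero.mpr hs1
  have : ∑' k, F k s = (1 - (3 : ℂ) ^ (1 - s)) * (1 - (2 : ℂ) ^ (-s)) * riemannZeta s := by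
    apply mul_left_cancel₀ hw2
    rw [hk, riemannZeta_eq_inv_sub_mul hs1]
    field_simp
  rw [← this]
  exact hsumm.hasSum
end
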